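/- Let (A, C, ψ) be a right-right entwining structure over a commutative ring k, g ∈ C a grouplike element, and λ : C → A a convolution-invertible k-linear map with convolution inverse λ⁻¹. The following are equivalent: (1) λ ∈ Q, i.e. ψ(c_1 ⊗ λ(c_2)) = λ(c) ⊗ g in A ⊗_k C for all c ∈ C; (2) Σ λ⁻¹(c_1)·ψ(c_2 ⊗ λ(c_3)) = ε(c) (1_A ⊗ g) for all c ∈ C, where A acts on the first factor of A ⊗_k C; (3) Σ λ⁻¹(c_1) ⊗ c_2 = ψ(g ⊗ λ⁻¹(c)) for all c ∈ C, i.e. λ⁻¹ is right C-colinear. -/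

import Mathlib

open TensorProduct CoalgebraStruct

universe u

section Entwining

variable (k A C : Type u) [CommRing k] [Ring A] [Algebra k A]
  [AddCommGroup C] [Module k C] [Coalgebra k C]

/-- The map `A ⊗ C → A ⊗ C`, `a ⊗ c ↦ Σ a · b_ψ ⊗ c^ψ` (entwine with `b` and multiply). -/
noncomputable def entwineRight (ψ : C ⊗[k] A →ₗ[k] A ⊗[k] C) (b : A) :
    A ⊗[k] C →ₗ[k] A ⊗[k] C :=
  LinearMap.rTensor C (LinearMap.mul' k A) ∘ₗ
    (TensorProduct.assoc k A A C).symm.toLinearMap ∘ₗ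
    LinearMap.lTensor A (ψ ∘ₗ (TensorProduct.mk k C A).flip b)

/-- The map `(C ⊗ C) ⊗ A → A ⊗ (C ⊗ C)`,
`c ⊗ c' ⊗ a ↦ Σ a_{ψΨ} ⊗ c^Ψ ⊗ c'^ψ`. -/
noncomputable def entwineTwice (ψ : C ⊗[k] A →ₗ[k] A ⊗[k] C) :
    (C ⊗[k] C) ⊗[k] A →ₗ[k] A ⊗[k] (C ⊗[k] C) :=
  (TensorProduct.assoc k A C C).toLinearMap ∘ₗ
    LinearMap.rTensor C ψ ∘ₗ
    (TensorProduct.assoc k C A C).symm.toLinearMap ∘ₗ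
    LinearMap.lTensor C ψ ∘ₗ
    (TensorProduct.assoc k C C A).toLinearMap

/-- `(A, C, ψ)` is a right-right entwining structure. -/
noncomputable def IsEntwining (ψ : C ⊗[k] A →ₗ[k] A ⊗[k] C) : Prop :=
  (∀ (c : C) (a b : A), ψ (c ⊗ₜ[k] (a * b)) = entwineRight k A C ψ b (ψ (c ⊗ₜ[k] a))) ∧
  (∀ c : C, ψ (c ⊗ₜ[k] (1 : A)) = (1 : A) ⊗ₜ[k] c) ∧
  (∀ (c : C) (a : A),
      LinearMap.lTensor A (comul (R := k)) (ψ (c ⊗ₜ[k] a)) =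
        entwineTwice k A C ψ ((comul c) ⊗ₜ[k] a)) ∧
  (∀ (c : C) (a : A),
      TensorProduct.rid k A (LinearMap.lTensor A (counit (R := k)) (ψ (c ⊗ₜ[k] a))) =
        (counit (R := k) c) • a)

/-- `g ∈ C` is a grouplike element. -/
def IsGrouplikeElem (g : C) : Prop := comul g = g ⊗ₜ[k] g ∧ counit (R := k) g = 1

/-- Membership in `Q`: `ψ(c_1 ⊗ q(c_2)) = q(c) ⊗ g` for all `c`. -/
def MemQ (ψ : C ⊗[k] A →ₗ[k] A ⊗[k] C) (g : C) (q : C →ₗ[k] A) : Prop :=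
  ∀ c : C, ψ (LinearMap.lTensor C q (comul c)) = q c ⊗ₜ[k] g

/-- The convolution product on `Hom_k(C, A)`. -/
noncomputable def conv (f h : C →ₗ[k] A) : C →ₗ[k] A :=
  LinearMap.mul' k A ∘ₗ TensorProduct.map f h ∘ₗ comul

/-- The unit of the convolution algebra: `c ↦ ε(c) 1`. -/
noncomputable def convUnit : C →ₗ[k] A :=
  Algebra.linearMap k A ∘ₗ counit

end Entwining

section Stmt8

variable (k A C : Type u) [CommRing k] [Ring A] [Algebra k A]
  [AddCommGroup C] [Module k C] [Coalgebra k C]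

/-- The map `c ↦ Σ lamInv(c_1) · ψ(c_2 ⊗ lam(c_3))`, where `A` acts by multiplication on
the first tensor factor of `A ⊗ C`. -/
noncomputable def cleftLHS (ψ : C ⊗[k] A →ₗ[k] A ⊗[k] C) (lam lamInv : C →ₗ[k] A) :
    C →ₗ[k] A ⊗[k] C :=
  LinearMap.rTensor C (LinearMap.mul' k A) ∘ₗ
    (TensorProduct.assoc k A A C).symm.toLinearMap ∘ₗ
    LinearMap.rTensor (A ⊗[k] C) lamInv ∘ₗ
    LinearMap.lTensor C (ψ ∘ₗ LinearMap.lTensor C lam ∘ₗ comul) ∘ₗ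
    comul

section Helpers

variable {k A C : Type u} [CommRing k] [Ring A] [Algebra k A]
  [AddCommGroup C] [Module k C] [Coalgebra k C]
variable {X Y Z W V U : Type u} [AddCommGroup X] [Module k X] [AddCommGroup Y] [Module k Y]
  [AddCommGroup Z] [Module k Z] [AddCommGroup W] [Module k W] [AddCommGroup V] [Module k V]
  [AddCommGroup U] [Module k U]

/-- Convolution of linear maps along a bilinear map. -/
noncomputable def bconv (B : X →ₗ[k] Y →ₗ[k] Z) (f : C →ₗ[k] X) (h : C →ₗ[k] Y) : C →ₗ[k] Z :=
  TensorProduct.lift B ∘ₗ TensorProduct.map f h ∘ₗ comul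

theorem bconv_assoc (B₁ : V →ₗ[k] Z →ₗ[k] W) (B₂ : X →ₗ[k] Y →ₗ[k] V)
    (B₃ : X →ₗ[k] U →ₗ[k] W) (B₄ : Y →ₗ[k] Z →ₗ[k] U)
    (hB : ∀ x y z, B₁ (B₂ x y) z = B₃ x (B₄ y z))
    (f : C →ₗ[k] X) (h : C →ₗ[k] Y) (l : C →ₗ[k] Z) :
    bconv B₁ (bconv B₂ f h) l = bconv B₃ f (bconv B₄ h l) := by
  have e1 : bconv B₁ (bconv B₂ f h) l =
      (TensorProduct.lift B₁ ∘ₗ TensorProduct.map (TensorProduct.lift B₂ ∘ₗ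
        TensorProduct.map f h) l) ∘ₗ LinearMap.rTensor C comul ∘ₗ comul := by
    rw [← LinearMap.comp_assoc, LinearMap.comp_assoc (LinearMap.rTensor C comul),
      LinearMap.map_comp_rTensor]
    rfl
  have e2 : bconv B₃ f (bconv B₄ h l) =
      (TensorProduct.lift B₃ ∘ₗ TensorProduct.map f (TensorProduct.lift B₄ ∘ₗ
        TensorProduct.map h l)) ∘ₗ LinearMap.lTensor C comul ∘ₗ comul := by
    rw [← LinearMap.comp_assoc, LinearMap.comp_assoc (LinearMap.lTensor C comul),
      LinearMap.map_comp_lTensor]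
    rfl
  rw [e1, e2, ← Coalgebra.coassoc, ← LinearMap.comp_assoc, ← LinearMap.comp_assoc,
    ← LinearMap.comp_assoc]
  congr 2
  apply TensorProduct.ext_threefold
  intro a b c
  simp [hB]

theorem bconv_unit_left (B : X →ₗ[k] Y →ₗ[k] Z) (x : X) (F : C →ₗ[k] Y) :
    bconv B ((counit (R := k) (A := C)).smulRight x) F = B x ∘ₗ F := by
  have e : bconv B ((counit (R := k) (A := C)).smulRight x) F =
      (TensorProduct.lift B ∘ₗ TensorProduct.map (LinearMap.toSpanSingleton k X x) F) ∘ₗ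
        LinearMap.rTensor C counit ∘ₗ comul := by
    rw [← LinearMap.comp_assoc, LinearMap.comp_assoc (LinearMap.rTensor C counit),
      LinearMap.map_comp_rTensor]
    rfl
  rw [e, Coalgebra.rTensor_counit_comp_comul]
  ext c
  simp

theorem bconv_unit_right (B : X →ₗ[k] Y →ₗ[k] Z) (y : Y) (F : C →ₗ[k] X) :
    bconv B F ((counit (R := k) (A := C)).smulRight y) = B.flip y ∘ₗ F := by
  have e : bconv B F ((counit (R := k) (A := C)).smulRight y) =
      (TensorProduct.lift B ∘ₗ TensorProduct.map F (LinearMap.toSpanSingleton k Y y)) ∘ₗ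
        LinearMap.lTensor C counit ∘ₗ comul := by
    rw [← LinearMap.comp_assoc, LinearMap.comp_assoc (LinearMap.lTensor C counit),
      LinearMap.map_comp_lTensor]
    rfl
  rw [e, Coalgebra.lTensor_counit_comp_comul]
  ext c
  simp

variable (k A C) in
/-- Left action of `A` on `A ⊗ C`. -/
noncomputable def actL : A →ₗ[k] (A ⊗[k] C) →ₗ[k] (A ⊗[k] C) :=
  TensorProduct.curry (LinearMap.rTensor C (LinearMap.mul' k A) ∘ₗ
    (TensorProduct.assoc k A A C).symm.toLinearMap)

theorem actL_tmul (a b : A) (c : C) : actL k A C a (b ⊗ₜ c) = (a * b) ⊗ₜ c := by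
  simp [actL]

theorem actL_mul (a b : A) (m : A ⊗[k] C) :
    actL k A C (a * b) m = actL k A C a (actL k A C b m) := by
  induction m with
  | zero => simp
  | add x y hx hy => simp [hx, hy]
  | tmul x y => simp [actL_tmul, mul_assoc]

theorem actL_one (m : A ⊗[k] C) : actL k A C 1 m = m := by
  induction m with
  | zero => simp
  | add x y hx hy => simp [hx, hy]
  | tmul x y => simp [actL_tmul]

theorem entwineRight_tmul (ψ : C ⊗[k] A →ₗ[k] A ⊗[k] C) (b a : A) (c : C) :
    entwineRight k A C ψ b (a ⊗ₜ c) = actL k A C a (ψ (c ⊗ₜ b)) := by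
  simp [entwineRight, actL]

/-- Right action of `A` on `A ⊗ C`. -/
noncomputable def actR (ψ : C ⊗[k] A →ₗ[k] A ⊗[k] C) :
    (A ⊗[k] C) →ₗ[k] A →ₗ[k] (A ⊗[k] C) :=
  LinearMap.mk₂ k (fun m b => entwineRight k A C ψ b m)
    (fun m m' b => map_add _ _ _) (fun r m b => map_smul _ _ _)
    (fun m b b' => by
      induction m with
      | zero => simp
      | add x y hx hy => simp only [map_add, hx, hy]; abel
      | tmul x y => simp [entwineRight_tmul, tmul_add])
    (fun r m b => by
      induction m with
      | zero => simp
      | add x y hx hy => simp only [map_add, hx, hy, smul_add]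
      | tmul x y => simp [entwineRight_tmul])

theorem actR_tmul (ψ : C ⊗[k] A →ₗ[k] A ⊗[k] C) (b a : A) (c : C) :
    actR ψ (a ⊗ₜ c) b = actL k A C a (ψ (c ⊗ₜ b)) := entwineRight_tmul ψ b a c

theorem actR_actL (ψ : C ⊗[k] A →ₗ[k] A ⊗[k] C) (a : A) (m : A ⊗[k] C) (b : A) :
    actR ψ (actL k A C a m) b = actL k A C a (actR ψ m b) := by
  induction m with
  | zero => simp
  | add x y hx hy => simp [hx, hy]
  | tmul x y => simp [actL_tmul, actR_tmul, actL_mul]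

theorem actR_mul (ψ : C ⊗[k] A →ₗ[k] A ⊗[k] C) (hψ : IsEntwining k A C ψ)
    (m : A ⊗[k] C) (a b : A) : actR ψ (actR ψ m a) b = actR ψ m (a * b) := by
  induction m with
  | zero => simp
  | add x y hx hy => simp [hx, hy]
  | tmul x y =>
    rw [actR_tmul, actR_tmul, actR_actL, hψ.1]
    rfl

theorem actR_one (ψ : C ⊗[k] A →ₗ[k] A ⊗[k] C) (hψ : IsEntwining k A C ψ)
    (m : A ⊗[k] C) : actR ψ m 1 = m := by
  induction m with
  | zero => simp
  | add x y hx hy => simp [hx, hy]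
  | tmul x y => rw [actR_tmul, hψ.2.1, actL_tmul, mul_one]

end Helpers

/-- For a convolution-invertible `λ : C → A` in an entwining structure with grouplike `g`,
the following are equivalent: (1) `λ ∈ Q`; (2) `Σ λ⁻¹(c_1)·ψ(c_2 ⊗ λ(c_3)) = ε(c) (1 ⊗ g)`;
(3) `Σ λ⁻¹(c_1) ⊗ c_2 = ψ(g ⊗ λ⁻¹(c))`, i.e. `λ⁻¹` is right `C`-colinear. -/
theorem memQ_iff_cleft_conditions
    (ψ : C ⊗[k] A →ₗ[k] A ⊗[k] C) (hψ : IsEntwining k A C ψ)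
    (g : C) (hg : IsGrouplikeElem k C g)
    (lam lamInv : C →ₗ[k] A)
    (hinv₁ : conv k A C lam lamInv = convUnit k A C)
    (hinv₂ : conv k A C lamInv lam = convUnit k A C) :
    (MemQ k A C ψ g lam ↔
      (∀ c : C, cleftLHS k A C ψ lam lamInv c =
        (counit (R := k) c) • ((1 : A) ⊗ₜ[k] g))) ∧
    ((∀ c : C, cleftLHS k A C ψ lam lamInv c =
        (counit (R := k) c) • ((1 : A) ⊗ₜ[k] g)) ↔
      (∀ c : C, LinearMap.rTensor C lamInv (comul c) = ψ (g ⊗ₜ[k] lamInv c))) := by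
  have u : convUnit k A C = (counit (R := k) (A := C)).smulRight (1 : A) := by
    ext c; simp [convUnit, Algebra.algebraMap_eq_smul_one]
  have i1 : bconv (LinearMap.mul k A) lam lamInv = (counit (R := k) (A := C)).smulRight 1 := by
    rw [← u, ← hinv₁]; rfl
  have i2 : bconv (LinearMap.mul k A) lamInv lam = (counit (R := k) (A := C)).smulRight 1 := by
    rw [← u, ← hinv₂]; rfl
  have LL : ∀ (f h : C →ₗ[k] A) (F : C →ₗ[k] A ⊗[k] C),
      bconv (actL k A C) (bconv (LinearMap.mul k A) f h) F
        = bconv (actL k A C) f (bconv (actL k A C) h F) :=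
    fun f h F => bconv_assoc _ _ _ _ (fun x y z => actL_mul x y z) f h F
  have RR : ∀ (F : C →ₗ[k] A ⊗[k] C) (f h : C →ₗ[k] A),
      bconv (actR ψ) (bconv (actR ψ) F f) h
        = bconv (actR ψ) F (bconv (LinearMap.mul k A) f h) :=
    fun F f h => bconv_assoc _ _ _ _ (fun x y z => actR_mul ψ hψ x y z) F f h
  have LR : ∀ (f : C →ₗ[k] A) (F : C →ₗ[k] A ⊗[k] C) (h : C →ₗ[k] A),
      bconv (actR ψ) (bconv (actL k A C) f F) h
        = bconv (actL k A C) f (bconv (actR ψ) F h) :=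
    fun f F h => bconv_assoc _ _ _ _ (fun x y z => actR_actL ψ x y z) f F h
  have L1 : ∀ F : C →ₗ[k] A ⊗[k] C,
      bconv (actL k A C) ((counit (R := k) (A := C)).smulRight 1) F = F := by
    intro F
    rw [bconv_unit_left]
    exact LinearMap.ext fun c => actL_one _
  have R1 : ∀ F : C →ₗ[k] A ⊗[k] C,
      bconv (actR ψ) F ((counit (R := k) (A := C)).smulRight 1) = F := by
    intro F
    rw [bconv_unit_right]
    exact LinearMap.ext fun c => actR_one ψ hψ _
  let G : C →ₗ[k] A ⊗[k] C := (counit (R := k) (A := C)).smulRight ((1 : A) ⊗ₜ[k] g)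
  let E : C →ₗ[k] A ⊗[k] C := TensorProduct.mk k A C 1
  let P : C →ₗ[k] A ⊗[k] C := ψ ∘ₗ LinearMap.lTensor C lam ∘ₗ comul
  have hP : bconv (actR ψ) E lam = P := by
    have : TensorProduct.lift (actR ψ) ∘ₗ TensorProduct.map E lam
        = ψ ∘ₗ LinearMap.lTensor C lam := by
      apply TensorProduct.ext'
      intro x y
      simp [E, actR_tmul, actL_one]
    simp only [bconv, P, ← LinearMap.comp_assoc, this]
  have hLP : cleftLHS k A C ψ lam lamInv = bconv (actL k A C) lamInv P := by
    have : LinearMap.rTensor C (LinearMap.mul' k A) ∘ₗ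
        (TensorProduct.assoc k A A C).symm.toLinearMap ∘ₗ
        LinearMap.rTensor (A ⊗[k] C) lamInv ∘ₗ LinearMap.lTensor C P
        = TensorProduct.lift (actL k A C) ∘ₗ TensorProduct.map lamInv P := by
      apply TensorProduct.ext'
      intro x y
      simp [actL]
    rw [bconv, ← LinearMap.comp_assoc, ← this]
    rfl
  have hLG : ∀ c, bconv (actL k A C) lam G c = lam c ⊗ₜ g := by
    intro c
    rw [bconv_unit_right]
    simp [actL_tmul]
  have hGR : ∀ c, bconv (actR ψ) G lamInv c = ψ (g ⊗ₜ[k] lamInv c) := by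
    intro c
    rw [bconv_unit_left]
    simp [actR_tmul, actL_one]
  have hLE : bconv (actL k A C) lamInv E = LinearMap.rTensor C lamInv ∘ₗ comul := by
    have : TensorProduct.lift (actL k A C) ∘ₗ TensorProduct.map lamInv E
        = LinearMap.rTensor C lamInv := by
      apply TensorProduct.ext'
      intro x y
      simp [E, actL_tmul]
    rw [bconv, ← LinearMap.comp_assoc, this]
  have s1 : MemQ k A C ψ g lam ↔ P = bconv (actL k A C) lam G := by
    rw [LinearMap.ext_iff]
    exact forall_congr' fun c => by rw [hLG]; rfl
  have s2 : (∀ c : C, cleftLHS k A C ψ lam lamInv c =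
        (counit (R := k) c) • ((1 : A) ⊗ₜ[k] g)) ↔ bconv (actL k A C) lamInv P = G := by
    rw [LinearMap.ext_iff, hLP]
    exact Iff.rfl
  have s3 : (∀ c : C, LinearMap.rTensor C lamInv (comul c) = ψ (g ⊗ₜ[k] lamInv c)) ↔
      bconv (actL k A C) lamInv E = bconv (actR ψ) G lamInv := by
    rw [LinearMap.ext_iff, hLE]
    exact forall_congr' fun c => by rw [hGR]; rfl
  rw [s1, s2, s3]
  refine ⟨⟨fun h => ?_, fun h => ?_⟩, ⟨fun h => ?_, fun h => ?_⟩⟩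
  · rw [h, ← LL, i2, L1]
  · rw [← h, ← LL, i1, L1]
  · rw [← h, ← hP, LR, RR, i1, R1]
  · rw [← hP, ← LR, h, RR, i2, R1]

end Stmt8
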